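/- arXiv:2602.22838 — 2 statements merged into one kernel-verified Lean document; each statement's English description precedes it below -/
import Mathlib

section
/- The Plurality social choice correspondence is k-augmentation strategyproof for every k ≥ ⌈(n−1)/2⌉; consequently its manipulation potential satisfies Φ(Plur) ≤ ⌈(n−1)/2⌉. -/
open Finset

/-- A strict linear preference order over `m` candidates, encoded as the permutation sending
each candidate to its rank; rank `0` is the most preferred position, so
`c ≻ c'` iff `p c < p c'`. -/
abbrev Pref (m : ℕ) := Equiv.Perm (Fin m)

/-- A profile of `N` voters, each with a strict preference over `m` candidates. -/
abbrev Profile (m N : ℕ) := Fin N → Pref m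

/-- A social choice correspondence: for each number `N` of voters, it maps each `N`-voter
profile to a set of (tied) winners. -/
abbrev SCC (m : ℕ) := (N : ℕ) → Profile m N → Finset (Fin m)

/-- The profile `P` with `k` extra copies of voter `i`'s preference appended. -/
def addCopies {m n : ℕ} (P : Profile m n) (i : Fin n) (k : ℕ) : Profile m (n + k) :=
  fun j => if h : (j : ℕ) < n then P ⟨j, h⟩ else P i

/-- Break a tie among the candidates in `A` using the linear tie-breaking order `τ`:
the winner is the `τ`-maximal (lowest `τ`-rank) element of `A`. -/
noncomputable def tiebreak {m : ℕ} [NeZero m] (τ : Pref m) (A : Finset (Fin m)) : Fin m :=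
  if h : A.Nonempty then τ.symm ((A.image (fun c => τ c)).min' (h.image _)) else 0

/-- `F` is `k`-augmentation strategyproof on `n`-voter profiles: for every tie-breaker `τ`,
profile `P`, voter `i`, and alternative preference `q`, voter `i` weakly prefers the outcome
obtained by adding `k` truthful copies of her vote to the outcome of the manipulation `q`. -/
def kASP (m n : ℕ) [NeZero m] (F : SCC m) (k : ℕ) : Prop :=
  ∀ (τ : Pref m) (P : Profile m n) (i : Fin n) (q : Pref m),
    (P i) (tiebreak τ (F (n + k) (addCopies P i k))) ≤
      (P i) (tiebreak τ (F n (Function.update P i q)))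

/-- The manipulation potential of `F` on `n`-voter profiles: the least `k` such that `F` is
`k'`-augmentation strategyproof for all `k' ≥ k`, and `⊤` (i.e. `∞`) if no such `k` exists. -/
noncomputable def manipPot (m n : ℕ) [NeZero m] (F : SCC m) : ℕ∞ :=
  sInf ((fun k : ℕ => (k : ℕ∞)) '' {k : ℕ | ∀ k' : ℕ, k ≤ k' → kASP m n F k'})

/-- The number of voters ranking candidate `c` first. -/
def pluralityScore {m N : ℕ} [NeZero m] (P : Profile m N) (c : Fin m) : ℕ :=
  (Finset.univ.filter (fun i => P i c = 0)).card

/-- Plurality: the winners are the candidates ranked first by the most voters. -/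
def plurality (m : ℕ) [NeZero m] : SCC m := fun _ P =>
  Finset.univ.filter (fun c => ∀ c', pluralityScore P c' ≤ pluralityScore P c)

/-!
A candidate ranked first by more than half of the voters is the only Plurality winner. Suppose that
adding `k` copies of voter `i`'s ballot elects some `w` other than her favourite. Her favourite
then has at least `k + 1` first places, hence so does `w`. Since she ranks `w` first in none of her
ballots, these `k + 1 > n / 2` first places come from the other original voters, and `w` wins by
strict majority however she votes.
-/

theorem tiebreak_mem {m : ℕ} [NeZero m] (τ : Pref m) {A : Finset (Fin m)} (hA : A.Nonempty) :
    tiebreak τ A ∈ A := by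
  obtain ⟨c, hc, hmin⟩ := mem_image.1 ((A.image (fun c => τ c)).min'_mem (hA.image _))
  rw [tiebreak, dif_pos hA, ← hmin, Equiv.symm_apply_apply]
  exact hc

section PluralityScore

variable {m n k : ℕ} [NeZero m]

theorem pluralityScore_append (P : Profile m n) (Q : Profile m k) (c : Fin m) :
    pluralityScore (Fin.append P Q) c = pluralityScore P c + pluralityScore Q c := by
  simp only [pluralityScore, card_filter, Fin.sum_univ_add, Fin.append_left, Fin.append_right]

theorem pluralityScore_const (p : Pref m) (c : Fin m) :
    pluralityScore (fun _ : Fin k => p) c = if p c = 0 then k else 0 := by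
  simp only [pluralityScore, filter_const, apply_ite card, card_univ, Fintype.card_fin, card_empty]

theorem pluralityScore_pos {P : Profile m n} {i : Fin n} {c : Fin m} (hc : P i c = 0) :
    0 < pluralityScore P c :=
  card_pos.2 ⟨i, mem_filter.2 ⟨mem_univ i, hc⟩⟩

theorem pluralityScore_add_le (P : Profile m n) {c d : Fin m} (hcd : c ≠ d) :
    pluralityScore P c + pluralityScore P d ≤ n := by
  have hdisj : Disjoint (univ.filter fun i => P i c = 0) (univ.filter fun i => P i d = 0) :=
    disjoint_filter.2 fun i _ hc hd => hcd ((P i).injective (hc.trans hd.symm))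
  calc pluralityScore P c + pluralityScore P d
      = #((univ.filter fun i => P i c = 0) ∪ univ.filter fun i => P i d = 0) :=
        (card_union_of_disjoint hdisj).symm
    _ ≤ n := card_finset_fin_le _

theorem pluralityScore_le_update (P : Profile m n) {i : Fin n} {c : Fin m} (hc : P i c ≠ 0)
    (q : Pref m) : pluralityScore P c ≤ pluralityScore (Function.update P i q) c := by
  refine card_le_card (monotone_filter_right _ fun j _ hj => ?_)
  have hji : j ≠ i := by
    rintro rfl
    exact hc hj
  rwa [Function.update_of_ne hji]

end PluralityScore

section AddCopies

variable {m n : ℕ}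

theorem addCopies_eq_append (P : Profile m n) (i : Fin n) (k : ℕ) :
    addCopies P i k = Fin.append P fun _ => P i := by
  funext j
  cases j using Fin.addCases <;> simp [addCopies]

theorem pluralityScore_addCopies [NeZero m] (P : Profile m n) (i : Fin n) (k : ℕ) (c : Fin m) :
    pluralityScore (addCopies P i k) c = pluralityScore P c + if P i c = 0 then k else 0 := by
  rw [addCopies_eq_append, pluralityScore_append, pluralityScore_const]

end AddCopies

section Plurality

variable {m n k : ℕ} [NeZero m]

theorem mem_plurality {P : Profile m n} {c : Fin m} :
    c ∈ plurality m n P ↔ ∀ d, pluralityScore P d ≤ pluralityScore P c := by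
  simp only [plurality, mem_filter, mem_univ, true_and]

theorem plurality_nonempty (P : Profile m n) : (plurality m n P).Nonempty := by
  obtain ⟨c, hc⟩ := Finite.exists_max (pluralityScore P)
  exact ⟨c, mem_plurality.2 hc⟩

theorem tiebreak_plurality_mem (τ : Pref m) (P : Profile m n) :
    tiebreak τ (plurality m n P) ∈ plurality m n P :=
  tiebreak_mem τ (plurality_nonempty P)

theorem eq_of_mem_plurality_of_lt_two_mul_pluralityScore {P : Profile m n} {c d : Fin m}
    (hd : d ∈ plurality m n P) (hc : n < 2 * pluralityScore P c) : d = c := by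
  by_contra hdc
  have hle : pluralityScore P c ≤ pluralityScore P d := mem_plurality.1 hd c
  have hsum : pluralityScore P d + pluralityScore P c ≤ n := pluralityScore_add_le P hdc
  omega

theorem lt_pluralityScore_of_mem_plurality_addCopies {P : Profile m n} {i : Fin n} {w : Fin m}
    (hw : w ∈ plurality m (n + k) (addCopies P i k)) (htop : P i w ≠ 0) :
    k < pluralityScore P w := by
  set t : Fin m := (P i).symm 0
  have ht : P i t = 0 := (P i).apply_symm_apply 0
  have hpos : 0 < pluralityScore P t := pluralityScore_pos ht
  have hle : pluralityScore P t + k ≤ pluralityScore P w := by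
    simpa only [pluralityScore_addCopies, if_pos ht, if_neg htop, add_zero]
      using mem_plurality.1 hw t
  omega

theorem kASP_plurality_of_half_le (hk : n / 2 ≤ k) : kASP m n (plurality m) k := by
  intro τ P i q
  set w := tiebreak τ (plurality m (n + k) (addCopies P i k))
  by_cases htop : P i w = 0
  · rw [htop]
    exact Fin.zero_le _
  have hw : k < pluralityScore P w :=
    lt_pluralityScore_of_mem_plurality_addCopies (tiebreak_plurality_mem τ _) htop
  have hmajority : n < 2 * pluralityScore (Function.update P i q) w := by
    have := pluralityScore_le_update P htop q
    omega
  rw [eq_of_mem_plurality_of_lt_two_mul_pluralityScore (tiebreak_plurality_mem τ _) hmajority]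

end Plurality

theorem manipPot_le {m n k : ℕ} [NeZero m] {F : SCC m} (hF : ∀ k', k ≤ k' → kASP m n F k') :
    manipPot m n F ≤ k :=
  sInf_le ⟨k, hF, rfl⟩

/-- Plurality is `k`-augmentation strategyproof for every
`k ≥ ⌈(n−1)/2⌉`; consequently `Φ(Plur) ≤ ⌈(n−1)/2⌉`. -/
theorem plurality_kASP_of_le (m n : ℕ) [NeZero m] (hm : 3 ≤ m) (hn : 2 ≤ n) :
    (∀ k : ℕ, (n - 1 + 1) / 2 ≤ k → kASP m n (plurality m) k) ∧
      manipPot m n (plurality m) ≤ (((n - 1 + 1) / 2 : ℕ) : ℕ∞) := by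
  have hkASP : ∀ k : ℕ, (n - 1 + 1) / 2 ≤ k → kASP m n (plurality m) k := fun k hk =>
    kASP_plurality_of_half_le (by omega)
  exact ⟨hkASP, manipPot_le hkASP⟩
end

section
/- Assume m ≥ 4, n ≥ 5, and n−1 is divisible by 4. Then for every integer k with 0 ≤ k < n−1, the Plurality-with-Runoff social choice correspondence is not k-augmentation strategyproof: there exist a profile with n voters, a voter i, a manipulation, and a tie-breaker under which the manipulation yields a strictly better outcome for voter i than adding k truthful copies of her vote. Since Plurality with Runoff is majority-consistent, its manipulation potential is exactly n−1. -/
open Finset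

/-- Plurality with Runoff, with parallel-universes tiebreaking: `c` wins if there is a pair
`{a, b}` of distinct candidates that can be the two plurality front-runners (every other
candidate has plurality score at most both of theirs) such that `c ∈ {a, b}` and at least
half of the voters prefer `c` to the other member of the pair. -/
def pwr (m : ℕ) [NeZero m] : SCC m := fun N P =>
  Finset.univ.filter (fun c =>
    ∃ a b : Fin m, a ≠ b ∧
      (∀ d : Fin m, d ≠ a → d ≠ b →
        pluralityScore P d ≤ pluralityScore P a ∧ pluralityScore P d ≤ pluralityScore P b) ∧
      ((c = a ∧ N ≤ 2 * (Finset.univ.filter (fun i => P i a < P i b)).card) ∨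
        (c = b ∧ N ≤ 2 * (Finset.univ.filter (fun i => P i b < P i a)).card)))

/-!
Once `n + 1` voters are joined by `k ≥ n` truthful copies, the favourite of the copied voter has a
strict majority, so majority-consistency elects it. For `k < n` take three candidates `X`, `B`, `A`
and the Condorcet cycle of ballots starting `X ≻ A`, `B ≻ X`, `A ≻ B`, cast by `x`, `b` and `a + 1`
voters. If all vote truthfully and `k` copies of an `A ≻ B ≻ X` ballot are added, `A` and `X` reach
the runoff and `X` wins it. If instead one `A` voter votes for `B`, then `B` and `X` reach the
runoff and `B` wins it, which that voter prefers. Taking `x = ⌊(n + 1) / 2⌋` makes the `B`-`X`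
runoff as close as possible. When `n + 1` is odd `B` wins it strictly; when `n + 1` is even it is
tied, but then `B` is no truthful winner, and the tie-breaker can favour `B`.
-/

section Tiebreaking

variable {m : ℕ} [NeZero m]

theorem tiebreak_eq_of_forall_le {τ : Pref m} {S : Finset (Fin m)} {c : Fin m} (hc : c ∈ S)
    (hle : ∀ d ∈ S, τ c ≤ τ d) : tiebreak τ S = c := by
  have hmin : (S.image fun d => τ d).min' (Finset.Nonempty.image ⟨c, hc⟩ _) = τ c :=
    le_antisymm (min'_le _ _ (mem_image_of_mem _ hc)) <|
      le_min' _ _ _ (forall_mem_image.2 hle)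
  rw [tiebreak, dif_pos ⟨c, hc⟩, hmin, Equiv.symm_apply_apply]

theorem tiebreak_singleton (τ : Pref m) (c : Fin m) : tiebreak τ {c} = c :=
  tiebreak_eq_of_forall_le (mem_singleton_self c) fun _ hd => mem_singleton.1 hd ▸ le_rfl

/-- The order `p`, a ballot or a tie-breaker, begins with `a ≻ b`. When `a = b` this only says
that `a` is on top. -/
structure StartsWith (p : Pref m) (a b : Fin m) : Prop where
  top : p a = 0
  second_le : ∀ c, c ≠ a → p b ≤ p c

namespace StartsWith

variable {p : Pref m} {a b c : Fin m}

theorem eq_zero_iff (h : StartsWith p a b) : p c = 0 ↔ c = a := by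
  rw [← h.top, p.apply_eq_iff_eq]

theorem lt_of_ne (h : StartsWith p a b) (hca : c ≠ a) : p a < p c := by
  rw [h.top, Fin.pos_iff_ne_zero]
  exact fun hc => hca (h.eq_zero_iff.1 hc)

theorem second_lt (h : StartsWith p a b) (hca : c ≠ a) (hcb : c ≠ b) : p b < p c :=
  (h.second_le c hca).lt_of_ne fun hbc => hcb (p.injective hbc).symm

theorem tiebreak_top (h : StartsWith p a b) {S : Finset (Fin m)} (ha : a ∈ S) :
    tiebreak p S = a :=
  tiebreak_eq_of_forall_le ha fun d _ => h.top ▸ Fin.zero_le (p d)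

theorem tiebreak_second (h : StartsWith p a b) {S : Finset (Fin m)} (hb : b ∈ S) (ha : a ∉ S) :
    tiebreak p S = b :=
  tiebreak_eq_of_forall_le hb fun d hd => h.second_le d fun hda => ha (hda ▸ hd)

end StartsWith

theorem exists_startsWith {a b : Fin m} (hab : a ≠ b) : ∃ p : Pref m, StartsWith p a b := by
  have hm : 2 ≤ m := Fin.nontrivial_iff_two_le.1 ⟨a, b, hab⟩
  have h_one_ne_zero : (1 : Fin m) ≠ 0 := by
    rw [Ne, Fin.one_eq_zero_iff]
    omega
  let σ : Pref m := Equiv.swap a 0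
  have hσa : σ a = 0 := Equiv.swap_apply_left a 0
  have hσb : σ b ≠ 0 := fun hb => hab (σ.injective (hσa.trans hb.symm))
  let p : Pref m := σ.trans (Equiv.swap (σ b) 1)
  have hpa : p a = 0 := by
    simp only [p, Equiv.trans_apply, hσa]
    exact Equiv.swap_apply_of_ne_of_ne hσb.symm h_one_ne_zero.symm
  have hpb : p b = 1 := Equiv.swap_apply_left _ _
  refine ⟨p, hpa, fun c hca => ?_⟩
  rw [hpb]
  exact Fin.one_le_of_ne_zero fun hpc => hca (p.injective (hpc.trans hpa.symm))

end Tiebreaking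

section Strategyproofness

variable {m n : ℕ} [NeZero m] {F : SCC m} {k : ℕ}

theorem not_kASP_of_mem {P : Profile m n} {i : Fin n} {q : Pref m} {x y : Fin m}
    (hyx : P i y < P i x) (hx : x ∈ F (n + k) (addCopies P i k))
    (hy : y ∈ F n (Function.update P i q))
    (hxy : y ∉ F (n + k) (addCopies P i k) ∨ x ∉ F n (Function.update P i q)) :
    ¬ kASP m n F k := by
  intro hF
  have hne : x ≠ y := by
    rintro rfl
    exact hyx.false
  rcases hxy with hy' | hx'
  · obtain ⟨τ, hτ⟩ := exists_startsWith hne.symm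
    have hle := hF τ P i q
    rw [hτ.tiebreak_second hx hy', hτ.tiebreak_top hy] at hle
    exact hyx.not_ge hle
  · obtain ⟨τ, hτ⟩ := exists_startsWith hne
    have hle := hF τ P i q
    rw [hτ.tiebreak_top hx, hτ.tiebreak_second hy hx'] at hle
    exact hyx.not_ge hle

theorem manipPot_eq_of_forall (hlt : ∀ j < k, ¬ kASP m n F j) (hge : ∀ j, k ≤ j → kASP m n F j) :
    manipPot m n F = k := by
  refine le_antisymm (sInf_le ⟨k, hge, rfl⟩) (le_sInf ?_)
  rintro _ ⟨j, hj, rfl⟩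
  exact Nat.cast_le.2 (not_lt.1 fun hjk => hlt j hjk (hj j le_rfl))

/-- Majority-consistency: a candidate ranked first by a strict majority is the unique winner. -/
def MajorityConsistent (F : SCC m) : Prop :=
  ∀ (N : ℕ) (P : Profile m N) (c : Fin m), N < 2 * pluralityScore P c → F N P = {c}

theorem add_one_le_pluralityScore_addCopies {P : Profile m n} {i : Fin n} {c : Fin m}
    (hc : P i c = 0) : k + 1 ≤ pluralityScore (addCopies P i k) c := by
  have hcopies : insert (Fin.castAdd k i) (univ.map (Fin.natAddEmb n)) ⊆
      univ.filter fun j => addCopies P i k j c = 0 := by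
    intro j hj
    rw [mem_insert, mem_map] at hj
    rw [mem_filter_univ]
    rcases hj with rfl | ⟨l, -, rfl⟩ <;> simp [addCopies, hc]
  have hi : Fin.castAdd k i ∉ univ.map (Fin.natAddEmb n) := by
    simp only [mem_map, mem_univ, true_and, Fin.natAddEmb_apply, Fin.ext_iff, not_exists,
      Fin.val_natAdd, Fin.val_castAdd]
    omega
  calc
    k + 1 = (insert (Fin.castAdd k i) (univ.map (Fin.natAddEmb n))).card := by
      rw [card_insert_of_notMem hi, card_map, card_univ, Fintype.card_fin]
    _ ≤ pluralityScore (addCopies P i k) c := card_le_card hcopies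

theorem MajorityConsistent.kASP (hF : MajorityConsistent F) (hk : n ≤ k + 1) : kASP m n F k := by
  intro τ P i q
  have htop : P i ((P i).symm 0) = 0 := Equiv.apply_symm_apply _ _
  have hmajority : n + k < 2 * pluralityScore (addCopies P i k) ((P i).symm 0) := by
    have := add_one_le_pluralityScore_addCopies (k := k) htop
    omega
  rw [hF _ _ _ hmajority, tiebreak_singleton, htop]
  exact Fin.zero_le _

end Strategyproofness

section Runoff

variable {m N : ℕ}

/-- The number of voters preferring `a` to `b`. -/
def supporters (P : Profile m N) (a b : Fin m) : ℕ :=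
  (univ.filter fun i => P i a < P i b).card

theorem supporters_add_supporters (P : Profile m N) {a b : Fin m} (hab : a ≠ b) :
    supporters P a b + supporters P b a = N := by
  have hnot : ∀ i, P i b < P i a ↔ ¬ P i a < P i b := fun i =>
    ⟨lt_asymm, fun h => (not_lt.1 h).lt_of_ne fun hba => hab ((P i).injective hba).symm⟩
  simp only [supporters, hnot]
  rw [card_filter_add_card_filter_not, card_univ, Fintype.card_fin]

variable [NeZero m] {P : Profile m N} {a b c d : Fin m}

theorem pluralityScore_le_supporters (P : Profile m N) (hab : a ≠ b) :
    pluralityScore P a ≤ supporters P a b := by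
  refine card_le_card (monotone_filter_right _ fun i _ ha => ?_)
  rw [ha, Fin.pos_iff_ne_zero]
  exact fun hb => hab ((P i).injective (ha.trans hb.symm))

/-- Some way of breaking plurality ties sends exactly `a` and `b` to the runoff. -/
def IsRunoffPair (P : Profile m N) (a b : Fin m) : Prop :=
  a ≠ b ∧ ∀ d, d ≠ a → d ≠ b →
    pluralityScore P d ≤ pluralityScore P a ∧ pluralityScore P d ≤ pluralityScore P b

theorem IsRunoffPair.symm (h : IsRunoffPair P a b) : IsRunoffPair P b a :=
  ⟨h.1.symm, fun d hb ha => (h.2 d ha hb).symm⟩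

theorem mem_pwr_iff :
    c ∈ pwr m N P ↔ ∃ d, IsRunoffPair P c d ∧ N ≤ 2 * supporters P c d := by
  simp only [pwr, mem_filter, mem_univ, true_and]
  constructor
  · rintro ⟨a, b, hab, hscore, ⟨rfl, hN⟩ | ⟨rfl, hN⟩⟩
    · exact ⟨b, ⟨hab, hscore⟩, hN⟩
    · exact ⟨a, IsRunoffPair.symm ⟨hab, hscore⟩, hN⟩
  · rintro ⟨d, ⟨hcd, hscore⟩, hN⟩
    exact ⟨c, d, hcd, hscore, .inl ⟨rfl, hN⟩⟩

theorem notMem_pwr_of_two_higher_scores (hab : a ≠ b)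
    (ha : pluralityScore P c < pluralityScore P a)
    (hb : pluralityScore P c < pluralityScore P b) : c ∉ pwr m N P := by
  rw [mem_pwr_iff]
  rintro ⟨d, ⟨-, hscore⟩, -⟩
  have hac : a ≠ c := by rintro rfl; exact ha.false
  have hbc : b ≠ c := by rintro rfl; exact hb.false
  by_cases had : a = d
  · exact hb.not_ge (hscore b hbc (had ▸ hab.symm)).1
  · exact ha.not_ge (hscore a hac had).1

-- Whoever meets `c` in the runoff has at least as many first places as `a`, hence is `a`.
theorem notMem_pwr_of_beaten (hac : a ≠ c) (hbeat : N < 2 * supporters P a c)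
    (hscore : ∀ d, d ≠ a → d ≠ c → pluralityScore P d < pluralityScore P a) :
    c ∉ pwr m N P := by
  rw [mem_pwr_iff]
  rintro ⟨d, ⟨hcd, hpair⟩, hN⟩
  by_cases had : a = d
  · subst had
    have := supporters_add_supporters P hac
    omega
  · exact (hscore d (Ne.symm had) hcd.symm).not_ge (hpair a hac had).2

theorem pwr_majorityConsistent [Nontrivial (Fin m)] : MajorityConsistent (pwr m) := by
  intro N P c hc
  have hbeat : ∀ d, d ≠ c → N < 2 * supporters P c d := fun d hd =>
    hc.trans_le (Nat.mul_le_mul_left 2 (pluralityScore_le_supporters P hd.symm))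
  have hscore : ∀ d, d ≠ c → pluralityScore P d < pluralityScore P c := by
    intro d hd
    have := pluralityScore_le_supporters P hd
    have := supporters_add_supporters P hd
    have := hbeat d hd
    omega
  rw [eq_singleton_iff_unique_mem]
  constructor
  · obtain ⟨d, hd, hmax⟩ := exists_max_image (univ.erase c) (pluralityScore P)
      ((exists_ne c).imp fun d hd => mem_erase.2 ⟨hd, mem_univ d⟩)
    have hdc : d ≠ c := ne_of_mem_erase hd
    refine mem_pwr_iff.2 ⟨d, ⟨hdc.symm, fun e hec _ => ⟨(hscore e hec).le, ?_⟩⟩, (hbeat d hdc).le⟩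
    exact hmax e (mem_erase.2 ⟨hec, mem_univ e⟩)
  · intro d hd
    by_contra hdc
    exact notMem_pwr_of_beaten (Ne.symm hdc) (hbeat d hdc) (fun e he _ => hscore e he) hd

end Runoff

section BlockProfile

variable {m N : ℕ} {p q r : Pref m} {u v w : ℕ}

/-- The profile in which the first `u` voters cast the ballot `p`, the next `v` voters cast `q`, and
all others cast `r`. The number `N` of voters is independent of `u` and `v`, so that appending
copies of `r` changes only `N`. -/
def blockProfile (p q r : Pref m) (u v : ℕ) : Profile m N := fun j =>
  if (j : ℕ) < u then p else if (j : ℕ) < u + v then q else r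

theorem addCopies_blockProfile {i : Fin N} (hi : u + v ≤ i) (k : ℕ) :
    addCopies (blockProfile p q r u v) i k = blockProfile p q r u v := by
  funext j
  simp only [addCopies, blockProfile]
  grind

theorem update_blockProfile {i : Fin N} (hi : (i : ℕ) = u + v) :
    Function.update (blockProfile p q r u v) i q = blockProfile p q r u (v + 1) := by
  funext j
  simp only [Function.update_apply, blockProfile, Fin.ext_iff]
  grind

theorem card_filter_blockProfile (h : u + v + w = N) (S : Pref m → Prop) [DecidablePred S] :
    (univ.filter fun j : Fin N => S (blockProfile p q r u v j)).card =
      (if S p then u else 0) + (if S q then v else 0) + (if S r then w else 0) := by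
  subst h
  rw [card_filter, Fin.sum_univ_add, Fin.sum_univ_add]
  simp [blockProfile, add_assoc]

theorem supporters_blockProfile (h : u + v + w = N) (a b : Fin m) :
    supporters (blockProfile p q r u v : Profile m N) a b =
      (if p a < p b then u else 0) + (if q a < q b then v else 0) +
        (if r a < r b then w else 0) :=
  card_filter_blockProfile h fun s => s a < s b

theorem pluralityScore_blockProfile [NeZero m] (h : u + v + w = N) (c : Fin m) :
    pluralityScore (blockProfile p q r u v : Profile m N) c =
      (if p c = 0 then u else 0) + (if q c = 0 then v else 0) + (if r c = 0 then w else 0) :=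
  card_filter_blockProfile h fun s => s c = 0

end BlockProfile

section CondorcetCycle

variable {m N k x b a : ℕ} [NeZero m] {X B A : Fin m} {pX pB pA : Pref m}

/-- Three ballots whose first choices `X`, `B`, `A` are each placed second by the next ballot, so
that `pX`, `pB`, `pA` begin with `X ≻ A`, `B ≻ X` and `A ≻ B`. -/
structure IsCondorcetCycle (X B A : Fin m) (pX pB pA : Pref m) : Prop where
  fst : StartsWith pX X A
  snd : StartsWith pB B X
  thd : StartsWith pA A B
  fst_ne_snd : X ≠ B
  snd_ne_thd : B ≠ A
  thd_ne_fst : A ≠ X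

theorem exists_isCondorcetCycle (hm : 3 ≤ m) :
    ∃ (X B A : Fin m) (pX pB pA : Pref m), IsCondorcetCycle X B A pX pB pA := by
  obtain ⟨X, B, A, hXB, hXA, hBA⟩ :=
    Fintype.two_lt_card_iff.1 (hm.trans_eq (Fintype.card_fin m).symm)
  obtain ⟨pX, hpX⟩ := exists_startsWith hXA
  obtain ⟨pB, hpB⟩ := exists_startsWith hXB.symm
  obtain ⟨pA, hpA⟩ := exists_startsWith hBA.symm
  exact ⟨X, B, A, pX, pB, pA, hpX, hpB, hpA, hXB, hBA, hXA.symm⟩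

namespace IsCondorcetCycle

theorem pluralityScore_eq (h : IsCondorcetCycle X B A pX pB pA) (hN : x + b + a = N) (c : Fin m) :
    pluralityScore (blockProfile pX pB pA x b : Profile m N) c =
      (if c = X then x else 0) + (if c = B then b else 0) + (if c = A then a else 0) := by
  simp only [pluralityScore_blockProfile hN, h.fst.eq_zero_iff, h.snd.eq_zero_iff,
    h.thd.eq_zero_iff]

theorem pluralityScore_fst (h : IsCondorcetCycle X B A pX pB pA) (hN : x + b + a = N) :
    pluralityScore (blockProfile pX pB pA x b : Profile m N) X = x := by
  simp [h.pluralityScore_eq hN, h.fst_ne_snd, h.thd_ne_fst.symm]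

theorem pluralityScore_snd (h : IsCondorcetCycle X B A pX pB pA) (hN : x + b + a = N) :
    pluralityScore (blockProfile pX pB pA x b : Profile m N) B = b := by
  simp [h.pluralityScore_eq hN, h.fst_ne_snd.symm, h.snd_ne_thd]

theorem pluralityScore_thd (h : IsCondorcetCycle X B A pX pB pA) (hN : x + b + a = N) :
    pluralityScore (blockProfile pX pB pA x b : Profile m N) A = a := by
  simp [h.pluralityScore_eq hN, h.thd_ne_fst, h.snd_ne_thd.symm]

theorem supporters_fst_thd (h : IsCondorcetCycle X B A pX pB pA) (hN : x + b + a = N) :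
    supporters (blockProfile pX pB pA x b : Profile m N) X A = x + b := by
  have hX : pX X < pX A := h.fst.lt_of_ne h.thd_ne_fst
  have hB : pB X < pB A := h.snd.second_lt h.snd_ne_thd.symm h.thd_ne_fst
  have hA : pA A < pA X := h.thd.lt_of_ne h.thd_ne_fst.symm
  simp [supporters_blockProfile hN, hX, hB, hA.not_gt]

theorem supporters_snd_fst (h : IsCondorcetCycle X B A pX pB pA) (hN : x + b + a = N) :
    supporters (blockProfile pX pB pA x b : Profile m N) B X = b + a := by
  have hX : pX X < pX B := h.fst.lt_of_ne h.fst_ne_snd.symm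
  have hB : pB B < pB X := h.snd.lt_of_ne h.fst_ne_snd
  have hA : pA B < pA X := h.thd.second_lt h.thd_ne_fst.symm h.fst_ne_snd
  simp [supporters_blockProfile hN, hX.not_gt, hB, hA]

theorem fst_mem_pwr (h : IsCondorcetCycle X B A pX pB pA) (hN : x + b + a = N)
    (hbx : b ≤ x) (hba : b ≤ a) (haxb : a ≤ x + b) :
    X ∈ pwr m N (blockProfile pX pB pA x b) := by
  refine mem_pwr_iff.2 ⟨A, ⟨h.thd_ne_fst.symm, fun d hdX hdA => ?_⟩, ?_⟩
  · have hd : pluralityScore (blockProfile pX pB pA x b : Profile m N) d ≤ b := by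
      rw [h.pluralityScore_eq hN, if_neg hdX, if_neg hdA]
      split_ifs <;> omega
    rw [h.pluralityScore_fst hN, h.pluralityScore_thd hN]
    exact ⟨hd.trans hbx, hd.trans hba⟩
  · rw [h.supporters_fst_thd hN]
    omega

theorem snd_mem_pwr (h : IsCondorcetCycle X B A pX pB pA) (hN : x + b + a = N)
    (hab : a ≤ b) (hax : a ≤ x) (hxba : x ≤ b + a) :
    B ∈ pwr m N (blockProfile pX pB pA x b) := by
  refine mem_pwr_iff.2 ⟨X, ⟨h.fst_ne_snd.symm, fun d hdB hdX => ?_⟩, ?_⟩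
  · have hd : pluralityScore (blockProfile pX pB pA x b : Profile m N) d ≤ a := by
      rw [h.pluralityScore_eq hN, if_neg hdX, if_neg hdB]
      split_ifs <;> omega
    rw [h.pluralityScore_snd hN, h.pluralityScore_fst hN]
    exact ⟨hd.trans hab, hd.trans hax⟩
  · rw [h.supporters_snd_fst hN]
    omega

theorem snd_notMem_pwr (h : IsCondorcetCycle X B A pX pB pA) (hN : x + b + a = N)
    (hbx : b < x) (hba : b < a) : B ∉ pwr m N (blockProfile pX pB pA x b) := by
  apply notMem_pwr_of_two_higher_scores h.thd_ne_fst.symm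
  · rwa [h.pluralityScore_snd hN, h.pluralityScore_fst hN]
  · rwa [h.pluralityScore_snd hN, h.pluralityScore_thd hN]

theorem fst_notMem_pwr (h : IsCondorcetCycle X B A pX pB pA) (hN : x + b + a = N)
    (hab : a < b) (hxba : x < b + a) : X ∉ pwr m N (blockProfile pX pB pA x b) := by
  refine notMem_pwr_of_beaten h.fst_ne_snd.symm ?_ fun d hdB hdX => ?_
  · rw [h.supporters_snd_fst hN]
    omega
  · rw [h.pluralityScore_snd hN, h.pluralityScore_eq hN, if_neg hdX, if_neg hdB]
    split_ifs <;> omega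

theorem not_kASP_pwr (h : IsCondorcetCycle X B A pX pB pA) (hN : x + b + (a + 1) = N)
    (hbx : b ≤ x) (hba : b ≤ a + 1 + k) (hxb : a + 1 + k ≤ x + b)
    (hab : a ≤ b + 1) (hax : a ≤ x) (hxba : x ≤ b + 1 + a)
    (hstrict : b < x ∧ b < a + 1 + k ∨ a < b + 1 ∧ x < b + 1 + a) :
    ¬ kASP m N (pwr m) k := by
  -- The first voter of the `pA` block deviates, which lengthens the adjacent `pB` block by one.
  let i : Fin N := ⟨x + b, by omega⟩
  let P : Profile m N := blockProfile pX pB pA x b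
  have hi : P i = pA := by simp [P, i, blockProfile]
  have htruth : addCopies P i k = blockProfile pX pB pA x b := addCopies_blockProfile le_rfl k
  have hmanip : Function.update P i pB = blockProfile pX pB pA x (b + 1) :=
    update_blockProfile rfl
  have hNk : x + b + (a + 1 + k) = N + k := by omega
  have hN' : x + (b + 1) + a = N := by omega
  refine not_kASP_of_mem (P := P) (i := i) (q := pB) (x := X) (y := B) ?_ ?_ ?_ ?_
  · rw [hi]
    exact h.thd.second_lt h.thd_ne_fst.symm h.fst_ne_snd
  · rw [htruth]
    exact h.fst_mem_pwr hNk hbx hba hxb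
  · rw [hmanip]
    exact h.snd_mem_pwr hN' hab hax hxba
  · rw [htruth, hmanip]
    exact hstrict.imp (fun hs => h.snd_notMem_pwr hNk hs.1 hs.2)
      (fun hs => h.fst_notMem_pwr hN' hs.1 hs.2)

end IsCondorcetCycle

end CondorcetCycle

theorem not_kASP_pwr_of_lt {m n k : ℕ} [NeZero m] (hm : 3 ≤ m) (hk : k < n) :
    ¬ kASP m (n + 1) (pwr m) k := by
  obtain ⟨X, B, A, pX, pB, pA, h⟩ := exists_isCondorcetCycle hm
  -- With `x` fixed to half the voters (rounded down), `b` is the least number such that `X` still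
  -- holds at least half the votes against `A` after adding the copies and, by voting for `B`, the
  -- deviating voter lifts `B` past `A` (for `n + 1` even: at least level with `A`).
  obtain ⟨s, rfl | rfl⟩ := n.even_or_odd'
  · have hb : (max (k + 1) s + 1) / 2 ≤ s := by omega
    apply h.not_kASP_pwr (x := s) (b := (max (k + 1) s + 1) / 2)
      (a := s - (max (k + 1) s + 1) / 2) <;> omega
  · have hb : max (k + 1) s / 2 ≤ s := by omega
    apply h.not_kASP_pwr (x := s + 1) (b := max (k + 1) s / 2)
      (a := s - max (k + 1) s / 2) <;> omega

theorem pwr_manipPot_eq_general (m n : ℕ) [NeZero m] (hm : 3 ≤ m) :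
    (∀ k : ℕ, k < n → ¬ kASP m (n + 1) (pwr m) k) ∧ manipPot m (n + 1) (pwr m) = n := by
  have : Nontrivial (Fin m) := Fin.nontrivial_iff_two_le.2 (by omega)
  have hlt : ∀ k < n, ¬ kASP m (n + 1) (pwr m) k := fun _ => not_kASP_pwr_of_lt hm
  have hge : ∀ k, n ≤ k → kASP m (n + 1) (pwr m) k := fun _ hk =>
    pwr_majorityConsistent.kASP (Nat.succ_le_succ hk)
  exact ⟨hlt, manipPot_eq_of_forall hlt hge⟩

/-- For `m ≥ 4`, `n ≥ 5` with `4 ∣ n − 1`: Plurality with Runoff is not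
`k`-augmentation strategyproof for any `0 ≤ k < n − 1`, and (being majority-consistent)
its manipulation potential is exactly `n − 1`. -/
theorem pwr_manipPot_eq (m n : ℕ) [NeZero m] (hm : 4 ≤ m) (hn : 5 ≤ n)
    (hdvd : 4 ∣ (n - 1)) :
    (∀ k : ℕ, k < n - 1 → ¬ kASP m n (pwr m) k) ∧
      manipPot m n (pwr m) = ((n - 1 : ℕ) : ℕ∞) := by
  obtain ⟨N, rfl⟩ : ∃ N, n = N + 1 := ⟨n - 1, by omega⟩
  exact pwr_manipPot_eq_general m N (by omega)
end
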